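/- arXiv:2204.09880 — 7 statements merged into one kernel-verified Lean document; each statement's English description precedes it below -/
import Mathlib

section
/- Let τ > 0 and define the curves c₁, c₂ : [−1,1] → ℝ³ by c₁(u) = (√(1 − u²) sin(τ u), −√(1 − u²) cos(τ u), u) and c₂(u) = (−√(1 − u²) sin(τ u), √(1 − u²) cos(τ u), u). Then the tangency set Γ = { x ∈ ℝ³ : |x| = 1, x₁ cos(τ x₃) + x₂ sin(τ x₃) = 0 } equals the union of the range of c₁ on [−1,1] and the range of c₂ on [−1,1]. -/
noncomputable section

/-- First branch of the tangency curve. -/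
def c₁ (τ u : ℝ) : Fin 3 → ℝ :=
  ![Real.sqrt (1 - u ^ 2) * Real.sin (τ * u),
    -(Real.sqrt (1 - u ^ 2) * Real.cos (τ * u)), u]

/-- Second branch of the tangency curve. -/
def c₂ (τ u : ℝ) : Fin 3 → ℝ :=
  ![-(Real.sqrt (1 - u ^ 2) * Real.sin (τ * u)),
    Real.sqrt (1 - u ^ 2) * Real.cos (τ * u), u]

/-- The tangency set `Γ` of the helical field on the unit sphere is the union of the two
branches `c₁` and `c₂` over `[-1,1]`. -/
theorem stmt_4 (τ : ℝ) (hτ : 0 < τ) :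
    {x : Fin 3 → ℝ | ‖(WithLp.equiv 2 (Fin 3 → ℝ)).symm x‖ = 1 ∧
        x 0 * Real.cos (τ * x 2) + x 1 * Real.sin (τ * x 2) = 0}
      = c₁ τ '' Set.Icc (-1 : ℝ) 1 ∪ c₂ τ '' Set.Icc (-1 : ℝ) 1 := by
  have key : ∀ x : Fin 3 → ℝ, ‖(WithLp.equiv 2 (Fin 3 → ℝ)).symm x‖ = 1 ↔
      x 0 ^ 2 + x 1 ^ 2 + x 2 ^ 2 = 1 := by
    intro x
    rw [EuclideanSpace.norm_eq, Real.sqrt_eq_one]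
    simp [Fin.sum_univ_three]
  ext x
  simp only [Set.mem_setOf_eq, key, Set.mem_union, Set.mem_image, Set.mem_Icc]
  constructor
  · rintro ⟨h1, h2⟩
    have hsc := Real.sin_sq_add_cos_sq (τ * x 2)
    obtain ⟨w, hw⟩ : ∃ w, w = x 0 * Real.sin (τ * x 2) - x 1 * Real.cos (τ * x 2) := ⟨_, rfl⟩
    have h0 : x 0 = w * Real.sin (τ * x 2) := by
      rw [hw]; linear_combination Real.cos (τ * x 2) * h2 - x 0 * hsc
    have h1' : x 1 = -(w * Real.cos (τ * x 2)) := by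
      rw [hw]; linear_combination Real.sin (τ * x 2) * h2 - x 1 * hsc
    have hw2 : 1 - x 2 ^ 2 = w ^ 2 := by
      rw [← h1]
      have e0 : x 0 ^ 2 = (w * Real.sin (τ * x 2)) ^ 2 := by rw [← h0]
      have e1 : x 1 ^ 2 = (-(w * Real.cos (τ * x 2))) ^ 2 := by rw [← h1']
      linear_combination e0 + e1 + w ^ 2 * hsc
    have hu : -1 ≤ x 2 ∧ x 2 ≤ 1 := by
      constructor <;> nlinarith [sq_nonneg w]
    rcases le_total 0 w with h | h
    · left
      refine ⟨x 2, hu, ?_⟩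
      have hs : Real.sqrt (1 - x 2 ^ 2) = w := by rw [hw2, Real.sqrt_sq h]
      ext i
      fin_cases i
      · simpa [c₁, hs] using h0.symm
      · simpa [c₁, hs] using h1'.symm
      · simp [c₁]
    · right
      refine ⟨x 2, hu, ?_⟩
      have hs : Real.sqrt (1 - x 2 ^ 2) = -w := by
        rw [hw2, Real.sqrt_sq_eq_abs, abs_of_nonpos h]
      ext i
      fin_cases i
      · simpa [c₂, hs] using h0.symm
      · simpa [c₂, hs] using h1'.symm
      · simp [c₂]
  · rintro (⟨u, ⟨ha, hb⟩, rfl⟩ | ⟨u, ⟨ha, hb⟩, rfl⟩)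
    all_goals
      have hsq := Real.sq_sqrt (show 0 ≤ 1 - u ^ 2 by nlinarith)
      have hsc := Real.sin_sq_add_cos_sq (τ * u)
      simp only [c₁, c₂, Matrix.cons_val]
      constructor
      · linear_combination (Real.sqrt (1 - u ^ 2)) ^ 2 * hsc + hsq
      · ring
end
end

section
/- Let τ > 0 and define c₃ : (−1,1) → ℝ³ by c₃(ρ) = (ρ sin(τ √(1 − ρ²)), −ρ cos(τ √(1 − ρ²)), √(1 − ρ²)). Then for every ρ ∈ (−1,1), the point c₃(ρ) lies on the unit sphere and satisfies the tangency equation x₁ cos(τ x₃) + x₂ sin(τ x₃) = 0 (so c₃(ρ) ∈ Γ), and c₃ is infinitely differentiable on (−1,1) with c₃′(0) ≠ 0. -/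
noncomputable section

/-- The chart `c₃(ρ) = (ρ sin(τ √(1 − ρ²)), −ρ cos(τ √(1 − ρ²)), √(1 − ρ²))` of the
tangency curve near the north pole. -/
def c₃ (τ ρ : ℝ) : Fin 3 → ℝ :=
  ![ρ * Real.sin (τ * Real.sqrt (1 - ρ ^ 2)),
    -(ρ * Real.cos (τ * Real.sqrt (1 - ρ ^ 2))),
    Real.sqrt (1 - ρ ^ 2)]

/-- `c₃(ρ)` lies on the unit sphere, satisfies the tangency equation
`x₁ cos(τ x₃) + x₂ sin(τ x₃) = 0`, and `c₃` is smooth on `(-1,1)` with `c₃′(0) ≠ 0`. -/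
theorem stmt_6 (τ : ℝ) (hτ : 0 < τ) :
    (∀ ρ ∈ Set.Ioo (-1 : ℝ) 1,
      ‖(WithLp.equiv 2 (Fin 3 → ℝ)).symm (c₃ τ ρ)‖ = 1 ∧
      c₃ τ ρ 0 * Real.cos (τ * c₃ τ ρ 2) + c₃ τ ρ 1 * Real.sin (τ * c₃ τ ρ 2) = 0) ∧
    ContDiffOn ℝ (⊤ : ℕ∞) (c₃ τ) (Set.Ioo (-1 : ℝ) 1) ∧
    deriv (c₃ τ) 0 ≠ 0 := by
  have hpos : ∀ ρ ∈ Set.Ioo (-1 : ℝ) 1, 0 < 1 - ρ ^ 2 := by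
    rintro ρ ⟨h1, h2⟩
    nlinarith
  have hs : ContDiffOn ℝ (⊤ : ℕ∞) (fun ρ : ℝ => Real.sqrt (1 - ρ ^ 2)) (Set.Ioo (-1 : ℝ) 1) := by
    apply ContDiffOn.sqrt
    · fun_prop
    · intro ρ hρ
      exact (hpos ρ hρ).ne'
  have hc : ContDiffOn ℝ (⊤ : ℕ∞) (c₃ τ) (Set.Ioo (-1 : ℝ) 1) := by
    rw [contDiffOn_pi]
    intro i
    fin_cases i
    · exact contDiffOn_id.mul (Real.contDiff_sin.comp_contDiffOn (contDiffOn_const.mul hs))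
    · exact (contDiffOn_id.mul
        (Real.contDiff_cos.comp_contDiffOn (contDiffOn_const.mul hs))).neg
    · exact hs
  refine ⟨?_, hc, ?_⟩
  · intro ρ hρ
    have h := Real.sq_sqrt (hpos ρ hρ).le
    constructor
    · rw [EuclideanSpace.norm_eq, Real.sqrt_eq_one]
      simp only [Fin.sum_univ_three, Real.norm_eq_abs, sq_abs]
      simp only [c₃, WithLp.equiv_symm_apply, Matrix.cons_val]
      have h2 := Real.sin_sq_add_cos_sq (τ * Real.sqrt (1 - ρ ^ 2))
      linear_combination h + ρ ^ 2 * h2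
    · simp only [c₃, Matrix.cons_val]
      ring
  · intro h0
    have hmem : Set.Ioo (-1 : ℝ) 1 ∈ nhds (0 : ℝ) := Ioo_mem_nhds (by norm_num) (by norm_num)
    have hd : HasDerivAt (c₃ τ) 0 0 := by
      rw [← h0]
      exact ((hc.contDiffAt hmem).differentiableAt (by simp)).hasDerivAt
    have hds : DifferentiableAt ℝ (fun ρ : ℝ => Real.sqrt (1 - ρ ^ 2)) 0 :=
      (hs.contDiffAt hmem).differentiableAt (by simp)
    rw [hasDerivAt_pi] at hd
    have e0 := (hd 0).unique
      ((hasDerivAt_id (0 : ℝ)).mul ((hds.const_mul τ).sin.hasDerivAt))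
    have e1 := (hd 1).unique
      ((hasDerivAt_id (0 : ℝ)).mul ((hds.const_mul τ).cos.hasDerivAt)).neg
    simp at e0 e1
    have h2 := Real.sin_sq_add_cos_sq τ
    rw [e1] at h2
    rw [← e0] at h2
    norm_num at h2
end
end

section
/- Let τ > 0, let u ∈ (−1,1), let x = c₁(u) = (√(1 − u²) sin(τ u), −√(1 − u²) cos(τ u), u), and let T(x) = c₁′(u)/‖c₁′(u)‖ be the unit tangent vector to the curve c₁ at x. Then |n_τ(x) · T(x)| = (1 − u²)/√(1 + τ²(1 − u²)²), and consequently, with B = −τ n_τ, |B(x) · T(x)| = τ(1 − u²)/√(1 + τ²(1 − u²)²). -/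
noncomputable section

/-- The helical magnetic potential. -/
def nHelix (τ : ℝ) (x : Fin 3 → ℝ) : Fin 3 → ℝ :=
  ![τ⁻¹ * Real.cos (τ * x 2), τ⁻¹ * Real.sin (τ * x 2), 0]

/-- Euclidean inner product on ℝ³. -/
def dot3 (x y : Fin 3 → ℝ) : ℝ := x 0 * y 0 + x 1 * y 1 + x 2 * y 2

/-- The unit tangent vector `c₁′(u)/‖c₁′(u)‖` to the curve `c₁`. -/
def unitTangent (τ u : ℝ) : Fin 3 → ℝ :=
  (‖(WithLp.equiv 2 (Fin 3 → ℝ)).symm (deriv (c₁ τ) u)‖)⁻¹ • deriv (c₁ τ) u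

lemma aux_deriv (τ u : ℝ) (hu : 0 < 1 - u ^ 2) :
    deriv (c₁ τ) u =
      ![-u / Real.sqrt (1 - u ^ 2) * Real.sin (τ * u)
          + Real.sqrt (1 - u ^ 2) * (Real.cos (τ * u) * τ),
        -(-u / Real.sqrt (1 - u ^ 2) * Real.cos (τ * u)
          + Real.sqrt (1 - u ^ 2) * (-Real.sin (τ * u) * τ)), 1] := by
  apply HasDerivAt.deriv
  have h0 : HasDerivAt (fun u : ℝ => Real.sqrt (1 - u ^ 2)) (-u / Real.sqrt (1 - u ^ 2)) u := by
    have h := (((hasDerivAt_id u).pow 2).const_sub 1).sqrt (by simpa using hu.ne')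
    refine HasDerivAt.congr_deriv (f := fun u : ℝ => Real.sqrt (1 - u ^ 2)) h ?_
    symm
    change -u / Real.sqrt (1 - u ^ 2)
      = -(((2 : ℕ) : ℝ) * u ^ 1 * 1) / (2 * Real.sqrt (1 - u ^ 2))
    push_cast
    have : Real.sqrt (1 - u ^ 2) ≠ 0 := (Real.sqrt_pos.2 hu).ne'
    field_simp
  have hl : HasDerivAt (fun u : ℝ => τ * u) τ u := by
    simpa using (hasDerivAt_id u).const_mul τ
  rw [hasDerivAt_pi]
  intro i
  fin_cases i
  · exact h0.mul hl.sin
  · exact (h0.mul hl.cos).neg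
  · exact hasDerivAt_id u

lemma aux_main (τ u : ℝ) (hτ : 0 < τ) (hu : u ∈ Set.Ioo (-1 : ℝ) 1) :
    dot3 (nHelix τ (c₁ τ u)) (unitTangent τ u)
        = (1 - u ^ 2) / Real.sqrt (1 + τ ^ 2 * (1 - u ^ 2) ^ 2) := by
  have hp : 0 < 1 - u ^ 2 := by nlinarith [hu.1, hu.2]
  have hr := Real.sqrt_pos.2 hp
  have hr2 := Real.sq_sqrt hp.le
  have hn : ‖(WithLp.equiv 2 (Fin 3 → ℝ)).symm (deriv (c₁ τ) u)‖
      = Real.sqrt (1 + τ ^ 2 * (1 - u ^ 2) ^ 2) / Real.sqrt (1 - u ^ 2) := by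
    rw [aux_deriv τ u hp, EuclideanSpace.norm_eq, ← Real.sqrt_div (by positivity)]
    congr 1
    simp [Fin.sum_univ_three]
    have hsc := Real.sin_sq_add_cos_sq (τ * u)
    generalize Real.sqrt (1 - u ^ 2) = r at *
    generalize Real.sin (τ * u) = s at *
    generalize Real.cos (τ * u) = c at *
    rw [← hr2]
    have e : (-u / r * s + r * (c * τ)) ^ 2 + (r * (s * τ) + -(-u / r * c)) ^ 2 + 1
        = (u ^ 2 / r ^ 2 + r ^ 2 * τ ^ 2) * (s ^ 2 + c ^ 2) + 1 := by
      field_simp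
      ring
    have hu2 : u ^ 2 = 1 - r ^ 2 := by linarith
    trans (-u / r * s + r * (c * τ)) ^ 2 + (r * (s * τ) + -(-u / r * c)) ^ 2 + 1
    · ring
    rw [e, hsc, hu2]
    field_simp
    ring
  have hd : dot3 (nHelix τ (c₁ τ u)) (deriv (c₁ τ) u) = Real.sqrt (1 - u ^ 2) := by
    rw [aux_deriv τ u hp]
    simp [dot3, nHelix, c₁]
    have hsc := Real.sin_sq_add_cos_sq (τ * u)
    field_simp
    linear_combination (Real.sqrt (1 - u ^ 2)) ^ 2 * τ * hsc
  have hl : dot3 (nHelix τ (c₁ τ u)) (unitTangent τ u)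
      = (‖(WithLp.equiv 2 (Fin 3 → ℝ)).symm (deriv (c₁ τ) u)‖)⁻¹
        * dot3 (nHelix τ (c₁ τ u)) (deriv (c₁ τ) u) := by
    simp only [dot3, unitTangent, Pi.smul_apply, smul_eq_mul]
    ring
  rw [hl, hd, hn, inv_div, div_mul_eq_mul_div, ← sq, hr2]

/-- `|n_τ(x)·T(x)| = (1 − u²)/√(1 + τ²(1 − u²)²)` and, for `B = −τ n_τ`,
`|B(x)·T(x)| = τ(1 − u²)/√(1 + τ²(1 − u²)²)` along the curve `c₁`. -/
theorem stmt_8 (τ u : ℝ) (hτ : 0 < τ) (hu : u ∈ Set.Ioo (-1 : ℝ) 1) :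
    |dot3 (nHelix τ (c₁ τ u)) (unitTangent τ u)|
        = (1 - u ^ 2) / Real.sqrt (1 + τ ^ 2 * (1 - u ^ 2) ^ 2) ∧
    |dot3 ((-τ) • nHelix τ (c₁ τ u)) (unitTangent τ u)|
        = τ * (1 - u ^ 2) / Real.sqrt (1 + τ ^ 2 * (1 - u ^ 2) ^ 2) := by
  have hp : 0 < 1 - u ^ 2 := by nlinarith [hu.1, hu.2]
  have h2 : dot3 ((-τ) • nHelix τ (c₁ τ u)) (unitTangent τ u)
      = -(τ * dot3 (nHelix τ (c₁ τ u)) (unitTangent τ u)) := by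
    simp only [dot3, Pi.smul_apply, smul_eq_mul]
    ring
  rw [h2, aux_main τ u hτ hu, abs_neg, ← mul_div_assoc]
  exact ⟨abs_of_nonneg (by positivity), abs_of_nonneg (by positivity)⟩
end
end

section
/- Let τ > 0 and let B = −τ n_τ be the helical magnetic field. For u ∈ (−1,1) and x = c₁(u), with T(x) the unit tangent to c₁ at x, one has B(x) · T(x) = 0 if and only if u² = 1; in particular B(x) · T(x) ≠ 0 for all x in the range of c₁ on (−1,1), so B is tangent to the curve Γ at only finitely many points (the two poles (0,0,±1)). -/
noncomputable section

/-- For `B = −τ n_τ` and `x = c₁(u)` with `u ∈ (−1,1)`: `B(x)·T(x) = 0 ↔ u² = 1`;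
in particular `B(x)·T(x) ≠ 0` on the range of `c₁` over `(−1,1)`. -/
theorem stmt_9 (τ u : ℝ) (hτ : 0 < τ) (hu : u ∈ Set.Ioo (-1 : ℝ) 1) :
    (dot3 ((-τ) • nHelix τ (c₁ τ u)) (unitTangent τ u) = 0 ↔ u ^ 2 = 1) ∧
    dot3 ((-τ) • nHelix τ (c₁ τ u)) (unitTangent τ u) ≠ 0 := by
  obtain ⟨h1, h2⟩ := hu
  have hpos : 0 < 1 - u ^ 2 := by nlinarith
  have hs : 0 < Real.sqrt (1 - u ^ 2) := Real.sqrt_pos.mpr hpos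
  have hin : HasDerivAt (fun v : ℝ => 1 - v ^ 2) (-(2 * u)) u := by
    simpa using (hasDerivAt_pow 2 u).const_sub 1
  have hsq := hin.sqrt hpos.ne'
  have hlin : HasDerivAt (fun v : ℝ => τ * v) τ u := by
    simpa using (hasDerivAt_id u).const_mul τ
  have hd0 := hsq.mul hlin.sin
  have hd1 := (hsq.mul hlin.cos).neg
  set s := Real.sqrt (1 - u ^ 2) with hsdef
  set d := -(2 * u) / (2 * s) with hddef
  have hd : HasDerivAt (c₁ τ)
      ![d * Real.sin (τ * u) + s * (Real.cos (τ * u) * τ),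
        -(d * Real.cos (τ * u) + s * (-Real.sin (τ * u) * τ)), 1] u := by
    rw [hasDerivAt_pi]
    intro i
    fin_cases i
    · exact hd0
    · exact hd1
    · exact hasDerivAt_id u
  have hne : dot3 ((-τ) • nHelix τ (c₁ τ u)) (unitTangent τ u) ≠ 0 := by
    unfold unitTangent
    rw [hd.deriv]
    set w : Fin 3 → ℝ := ![d * Real.sin (τ * u) + s * (Real.cos (τ * u) * τ),
        -(d * Real.cos (τ * u) + s * (-Real.sin (τ * u) * τ)), 1] with hw
    have hN : ‖(WithLp.equiv 2 (Fin 3 → ℝ)).symm w‖ ≠ 0 := by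
      rw [norm_ne_zero_iff]
      intro h
      have h3 : w = 0 := by
        have := congrArg (WithLp.equiv 2 (Fin 3 → ℝ)) h
        simpa using this
      have h4 : w 2 = 0 := by rw [h3]; rfl
      simp [hw] at h4
    set N := ‖(WithLp.equiv 2 (Fin 3 → ℝ)).symm w‖ with hNdef
    have key : dot3 ((-τ) • nHelix τ (c₁ τ u)) (N⁻¹ • w) = -(N⁻¹ * (s * τ)) := by
      have hcs := Real.sin_sq_add_cos_sq (τ * u)
      have hinv : τ * τ⁻¹ = 1 := mul_inv_cancel₀ hτ.ne'
      simp only [dot3, nHelix, c₁, hw, Pi.smul_apply, smul_eq_mul, Matrix.cons_val]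
      linear_combination (-(N⁻¹ * s * τ)) * (τ * τ⁻¹) * hcs - (N⁻¹ * s * τ) * hinv
    rw [key]
    exact neg_ne_zero.mpr (mul_ne_zero (inv_ne_zero hN) (mul_ne_zero hs.ne' hτ.ne'))
  exact ⟨⟨fun h => absurd h hne, fun h => by linarith⟩, hne⟩
end
end

section
/- Let τ > 0, u ∈ (−1,1), let γ = c₁(u), N(x) = −x, and let V = T × N be the explicit conormal vector along Γ at γ, and define p(r) = −cos r · N(γ) − sin r · V. Then the absolute value of the derivative at r = 0 of the function r ↦ n_τ(p(r)) · (−p(r)) equals (1/τ)√(1 + τ²(1 − u²)²). Consequently, for the helical field B = −τ n_τ, the magnetic curvature κ_{n,B}(γ) = |∂_r (B · N)|_{r=0}| equals √(1 + τ²(1 − u²)²), which is nonzero for every u. -/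
noncomputable section

/-- `m(u) = √((1 − u²)/(1 + τ²(1 − u²)²))`. -/
def mAux (τ u : ℝ) : ℝ := Real.sqrt ((1 - u ^ 2) / (1 + τ ^ 2 * (1 - u ^ 2) ^ 2))

/-- The explicit unit tangent vector to `c₁` at `c₁(u)`. -/
def Tex (τ u : ℝ) : Fin 3 → ℝ :=
  mAux τ u •
    ![-u * Real.sin (τ * u) / Real.sqrt (1 - u ^ 2)
        + τ * Real.sqrt (1 - u ^ 2) * Real.cos (τ * u),
      u * Real.cos (τ * u) / Real.sqrt (1 - u ^ 2)
        + τ * Real.sqrt (1 - u ^ 2) * Real.sin (τ * u),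
      1]

/-- The cross product on ℝ³. -/
def cross3 (a b : Fin 3 → ℝ) : Fin 3 → ℝ :=
  ![a 1 * b 2 - a 2 * b 1, a 2 * b 0 - a 0 * b 2, a 0 * b 1 - a 1 * b 0]

/-- The unit-speed geodesic of the sphere `p(r) = −cos r · N(γ) − sin r · V`,
where `γ = c₁(u)`, `N(x) = −x` and `V = T × N`. -/
def geo (τ u r : ℝ) : Fin 3 → ℝ :=
  (-Real.cos r) • (-(c₁ τ u)) + (-Real.sin r) • cross3 (Tex τ u) (-(c₁ τ u))

lemma hd_aux {f g : ℝ → ℝ} {a b x : ℝ} (h : HasDerivAt f a x) (h1 : ∀ r, g r = f r)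
    (h2 : b = a) : HasDerivAt g b x := by
  have : g = f := funext h1
  rw [this, h2]
  exact h

lemma deriv_aux (τ u : ℝ) (hτ : 0 < τ) (hu : u ∈ Set.Ioo (-1 : ℝ) 1) :
    HasDerivAt (fun r : ℝ => dot3 (nHelix τ (geo τ u r)) (-(geo τ u r)))
      (-((1 / τ) * Real.sqrt (1 + τ ^ 2 * (1 - u ^ 2) ^ 2))) 0 := by
  have hpos : 0 < 1 - u ^ 2 := by nlinarith [hu.1, hu.2]
  have hQpos : 0 < 1 + τ ^ 2 * (1 - u ^ 2) ^ 2 := by positivity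
  have hp : ∀ i, HasDerivAt (fun r : ℝ => geo τ u r i)
      (-(cross3 (Tex τ u) (-(c₁ τ u)) i)) 0 := by
    intro i
    have h1 := ((Real.hasDerivAt_cos 0).mul_const (c₁ τ u i)).sub
      ((Real.hasDerivAt_sin 0).mul_const (cross3 (Tex τ u) (-(c₁ τ u)) i))
    refine hd_aux h1 ?_ ?_
    · intro r
      simp [geo]
      ring
    · simp
  have hg : ∀ i, geo τ u 0 i = c₁ τ u i := by intro i; simp [geo]
  have hc := ((hp 2).const_mul τ).cos.const_mul τ⁻¹
  have hs := ((hp 2).const_mul τ).sin.const_mul τ⁻¹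
  have key := ((hc.mul (hp 0)).add (hs.mul (hp 1))).neg
  refine hd_aux key ?_ ?_
  · intro r
    simp [dot3, nHelix]
    ring
  · simp only [hg]
    simp only [cross3, Tex, mAux, c₁, Real.sqrt_div hpos.le]
    have hs0 : 0 < Real.sqrt (1 - u ^ 2) := Real.sqrt_pos.2 hpos
    have hs2 : Real.sqrt (1 - u ^ 2) ^ 2 = 1 - u ^ 2 := Real.sq_sqrt hpos.le
    have hq0 : 0 < Real.sqrt (1 + τ ^ 2 * (1 - u ^ 2) ^ 2) := Real.sqrt_pos.2 hQpos
    have hq2 : Real.sqrt (1 + τ ^ 2 * (1 - u ^ 2) ^ 2) ^ 2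
      = 1 + τ ^ 2 * (1 - u ^ 2) ^ 2 := Real.sq_sqrt hQpos.le
    have hSC := Real.sin_sq_add_cos_sq (τ * u)
    generalize Real.sqrt (1 + τ ^ 2 * (1 - u ^ 2) ^ 2) = q at *
    generalize Real.sqrt (1 - u ^ 2) = s at *
    simp
    generalize Real.sin (τ * u) = S at *
    generalize Real.cos (τ * u) = C at *
    have hu2 : u ^ 2 = 1 - s ^ 2 := by linarith
    rw [← hs2] at hq2
    field_simp
    have hC2 : C ^ 2 = 1 - S ^ 2 := by linarith
    grind

/-- `|d/dr [n_τ(p(r)) · (−p(r))]|_{r=0}| = (1/τ)√(1 + τ²(1 − u²)²)`; consequently for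
`B = −τ n_τ` the magnetic curvature `κ_{n,B}(γ) = |d/dr [B(p(r))·(−p(r))]|_{r=0}|`
equals `√(1 + τ²(1 − u²)²)`, which is nonzero. -/
theorem stmt_13 (τ u : ℝ) (hτ : 0 < τ) (hu : u ∈ Set.Ioo (-1 : ℝ) 1) :
    |deriv (fun r : ℝ => dot3 (nHelix τ (geo τ u r)) (-(geo τ u r))) 0|
        = (1 / τ) * Real.sqrt (1 + τ ^ 2 * (1 - u ^ 2) ^ 2) ∧
    |deriv (fun r : ℝ => dot3 ((-τ) • nHelix τ (geo τ u r)) (-(geo τ u r))) 0|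
        = Real.sqrt (1 + τ ^ 2 * (1 - u ^ 2) ^ 2) ∧
    Real.sqrt (1 + τ ^ 2 * (1 - u ^ 2) ^ 2) ≠ 0 := by
  have h := deriv_aux τ u hτ hu
  have hQpos : 0 < 1 + τ ^ 2 * (1 - u ^ 2) ^ 2 := by positivity
  have hq0 : 0 < Real.sqrt (1 + τ ^ 2 * (1 - u ^ 2) ^ 2) := Real.sqrt_pos.2 hQpos
  refine ⟨?_, ?_, hq0.ne'⟩
  · rw [h.deriv, abs_neg, abs_of_pos (by positivity)]
  · have h2 := h.const_mul (-τ)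
    have he : (fun r : ℝ => dot3 ((-τ) • nHelix τ (geo τ u r)) (-(geo τ u r)))
        = fun r : ℝ => -τ * dot3 (nHelix τ (geo τ u r)) (-(geo τ u r)) := by
      funext r
      simp only [dot3, Pi.smul_apply, smul_eq_mul]
      ring
    rw [he, h2.deriv]
    have e : -τ * -((1 / τ) * Real.sqrt (1 + τ ^ 2 * (1 - u ^ 2) ^ 2))
        = Real.sqrt (1 + τ ^ 2 * (1 - u ^ 2) ^ 2) := by
      field_simp
    rw [e, abs_of_pos hq0]
end
end

section
/- Let μ₀ ∈ (0,1), f(v) = 1 + v² − μ₀ v √(1 + v²), τ₀ = √( (1/2)(1/√(1 − μ₀²) − 1) ), and τ > 0, and define g : [−1,1] → ℝ by g(u) = f(τ(1 − u²)). If τ ≤ τ₀ then the minimum of g over [−1,1] is f(τ), attained exactly at u = 0; if τ > τ₀ then the minimum of g over [−1,1] is f(τ₀), attained exactly at the two points u = ±√(1 − τ₀/τ). -/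
noncomputable section

/-- The profile function `f(v) = 1 + v² − μ₀ v √(1 + v²)`. -/
def fProf (μ₀ v : ℝ) : ℝ := 1 + v ^ 2 - μ₀ * v * Real.sqrt (1 + v ^ 2)

/-- `τ₀ = √((1/2)(1/√(1 − μ₀²) − 1))`. -/
def τ₀ (μ₀ : ℝ) : ℝ := Real.sqrt ((1 / 2) * (1 / Real.sqrt (1 - μ₀ ^ 2) - 1))

def qP (v : ℝ) : ℝ := (v + Real.sqrt (1 + v ^ 2)) ^ 2

lemma qP_pos (v : ℝ) (hv : 0 ≤ v) : 0 < qP v := by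
  have : 0 < Real.sqrt (1 + v ^ 2) := Real.sqrt_pos.mpr (by positivity)
  unfold qP
  positivity

lemma qP_lt {a b : ℝ} (ha : 0 ≤ a) (hab : a < b) : qP a < qP b := by
  unfold qP
  have h : Real.sqrt (1 + a ^ 2) ≤ Real.sqrt (1 + b ^ 2) := Real.sqrt_le_sqrt (by nlinarith)
  have h0 : 0 ≤ Real.sqrt (1 + a ^ 2) := Real.sqrt_nonneg _
  nlinarith

lemma fProf_eq (μ v : ℝ) (hv : 0 ≤ v) :
    fProf μ v = 1 / 2 + (1 - μ) / 4 * qP v + (1 + μ) / 4 / qP v := by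
  have hs : 0 < Real.sqrt (1 + v ^ 2) := Real.sqrt_pos.mpr (by positivity)
  have hs2 : Real.sqrt (1 + v ^ 2) ^ 2 = 1 + v ^ 2 := Real.sq_sqrt (by positivity)
  have hinv : (qP v)⁻¹ = (Real.sqrt (1 + v ^ 2) - v) ^ 2 := by
    apply inv_eq_of_mul_eq_one_right
    unfold qP
    rw [← mul_pow]
    have : (v + Real.sqrt (1 + v ^ 2)) * (Real.sqrt (1 + v ^ 2) - v) = 1 := by
      linear_combination hs2
    rw [this, one_pow]
  rw [div_eq_mul_inv _ (qP v), hinv]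
  unfold fProf qP
  linear_combination (-1 / 2) * hs2

lemma t0_nonneg (μ : ℝ) : 0 ≤ τ₀ μ := Real.sqrt_nonneg _

lemma qP_t0 (μ : ℝ) (hμ : μ ∈ Set.Ioo (0 : ℝ) 1) : (1 - μ) * qP (τ₀ μ) ^ 2 = 1 + μ := by
  obtain ⟨h0, h1⟩ := hμ
  have hc0 : 0 < 1 - μ ^ 2 := by nlinarith
  have hc : 0 < Real.sqrt (1 - μ ^ 2) := Real.sqrt_pos.mpr hc0
  have hc2 : Real.sqrt (1 - μ ^ 2) ^ 2 = 1 - μ ^ 2 := Real.sq_sqrt hc0.le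
  have hc1 : Real.sqrt (1 - μ ^ 2) ≤ 1 := by
    nlinarith [sq_nonneg μ]
  have hx1 : 1 ≤ 1 / Real.sqrt (1 - μ ^ 2) := by
    rw [le_div_iff₀ hc]; linarith
  have ht2 : τ₀ μ ^ 2 = (1 / 2) * (1 / Real.sqrt (1 - μ ^ 2) - 1) :=
    Real.sq_sqrt (by linarith)
  have hxx : (1 - μ ^ 2) * (1 / Real.sqrt (1 - μ ^ 2)) ^ 2 = 1 := by
    rw [div_pow, hc2]; field_simp
  have ht := t0_nonneg μ
  generalize τ₀ μ = t at *
  generalize 1 / Real.sqrt (1 - μ ^ 2) = x at *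
  have hs0 : 0 ≤ Real.sqrt (1 + t ^ 2) := Real.sqrt_nonneg _
  have hs2 : Real.sqrt (1 + t ^ 2) ^ 2 = 1 + t ^ 2 := Real.sq_sqrt (by positivity)
  unfold qP
  generalize Real.sqrt (1 + t ^ 2) = s at *
  have hy : 2 * t * s = μ * x := by
    have h : (2 * t * s) ^ 2 = (μ * x) ^ 2 := by
      rw [mul_pow, mul_pow, hs2, ht2]
      linear_combination hxx
    exact (pow_left_inj₀ (by positivity) (by positivity) two_ne_zero).mp h
  have hp : (t + s) ^ 2 = (1 + μ) * x := by
    linear_combination hs2 + hy + 2 * ht2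
  rw [hp]
  linear_combination (1 + μ) * hxx

lemma fProf_sub (μ a b : ℝ) (ha : 0 ≤ a) (hb : 0 ≤ b) :
    (fProf μ a - fProf μ b) * (4 * (qP a * qP b)) =
      (qP a - qP b) * ((1 - μ) * (qP a * qP b) - (1 + μ)) := by
  rw [fProf_eq μ a ha, fProf_eq μ b hb]
  have := (qP_pos a ha).ne'
  have := (qP_pos b hb).ne'
  field_simp
  ring

lemma fProf_anti (μ : ℝ) (hμ : μ ∈ Set.Ioo (0 : ℝ) 1) {a b : ℝ} (ha : 0 ≤ a) (hab : a < b)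
    (hb : b ≤ τ₀ μ) : fProf μ b < fProf μ a := by
  have h := fProf_sub μ a b ha (ha.trans hab.le)
  have pa := qP_pos a ha
  have pb := qP_pos b (ha.trans hab.le)
  have hl := qP_lt ha hab
  have hb' : qP b ≤ qP (τ₀ μ) := by
    rcases hb.eq_or_lt with h | h
    · rw [h]
    · exact (qP_lt (ha.trans hab.le) h).le
  have h0 := qP_t0 μ hμ
  have hprod : qP a * qP b < qP (τ₀ μ) ^ 2 := by nlinarith
  have hμ1 : 0 < 1 - μ := by linarith [hμ.2]
  have h2 : (1 - μ) * (qP a * qP b) < 1 + μ := by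
    rw [← h0]; exact mul_lt_mul_of_pos_left hprod hμ1
  have h3 : 0 < (fProf μ a - fProf μ b) * (4 * (qP a * qP b)) := by
    rw [h]; exact mul_pos_of_neg_of_neg (by linarith) (by linarith)
  have := pos_of_mul_pos_left h3 (by positivity)
  linarith

lemma fProf_min (μ : ℝ) (hμ : μ ∈ Set.Ioo (0 : ℝ) 1) {a : ℝ} (ha : 0 ≤ a) (hne : a ≠ τ₀ μ) :
    fProf μ (τ₀ μ) < fProf μ a := by
  have ht := t0_nonneg μ
  have h := fProf_sub μ a _ ha ht
  have pa := qP_pos a ha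
  have pb := qP_pos _ ht
  have h0 := qP_t0 μ hμ
  have hμ1 : 0 < 1 - μ := by linarith [hμ.2]
  have hq : qP a - qP (τ₀ μ) ≠ 0 := by
    rcases hne.lt_or_gt with h | h
    · exact (sub_neg.mpr (qP_lt ha h)).ne
    · exact (sub_pos.mpr (qP_lt ht h)).ne'
  have h3 : 0 < (fProf μ a - fProf μ (τ₀ μ)) * (4 * (qP a * qP (τ₀ μ))) := by
    have : (qP a - qP (τ₀ μ)) * ((1 - μ) * (qP a * qP (τ₀ μ)) - (1 + μ)) =
      (1 - μ) * qP (τ₀ μ) * (qP a - qP (τ₀ μ)) ^ 2 := by rw [← h0]; ring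
    rw [h, this]; positivity
  have := pos_of_mul_pos_left h3 (by positivity)
  linarith

/-- Minimization of `g(u) = f(τ(1 − u²))` over `[−1,1]`: for `τ ≤ τ₀` the minimum is
`f(τ)`, attained exactly at `u = 0`; for `τ > τ₀` the minimum is `f(τ₀)`, attained
exactly at `u = ±√(1 − τ₀/τ)`. -/
theorem stmt_17 (μ₀ τ : ℝ) (hμ : μ₀ ∈ Set.Ioo (0 : ℝ) 1) (hτ : 0 < τ) :
    (τ ≤ τ₀ μ₀ →
      IsLeast ((fun u => fProf μ₀ (τ * (1 - u ^ 2))) '' Set.Icc (-1 : ℝ) 1)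
        (fProf μ₀ τ) ∧
      {u ∈ Set.Icc (-1 : ℝ) 1 | fProf μ₀ (τ * (1 - u ^ 2)) = fProf μ₀ τ} = {0}) ∧
    (τ₀ μ₀ < τ →
      IsLeast ((fun u => fProf μ₀ (τ * (1 - u ^ 2))) '' Set.Icc (-1 : ℝ) 1)
        (fProf μ₀ (τ₀ μ₀)) ∧
      {u ∈ Set.Icc (-1 : ℝ) 1 | fProf μ₀ (τ * (1 - u ^ 2)) = fProf μ₀ (τ₀ μ₀)}
        = {-Real.sqrt (1 - τ₀ μ₀ / τ), Real.sqrt (1 - τ₀ μ₀ / τ)}) := by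
  have key : ∀ u ∈ Set.Icc (-1 : ℝ) 1, 0 ≤ τ * (1 - u ^ 2) := by
    rintro u ⟨h1, h2⟩
    exact mul_nonneg hτ.le (by nlinarith)
  constructor
  · intro hle
    have hlt : ∀ u ∈ Set.Icc (-1 : ℝ) 1, u ≠ 0 →
        fProf μ₀ τ < fProf μ₀ (τ * (1 - u ^ 2)) := by
      intro u hu hne
      have : 0 < u ^ 2 := by positivity
      exact fProf_anti μ₀ hμ (key u hu) (by nlinarith) hle
    refine ⟨⟨⟨0, by norm_num, by simp⟩, ?_⟩, ?_⟩
    · rintro _ ⟨u, hu, rfl⟩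
      by_cases h : u = 0
      · simp [h]
      · exact (hlt u hu h).le
    · ext u
      simp only [Set.mem_ofPred_eq, Set.mem_singleton_iff]
      constructor
      · rintro ⟨hu, he⟩
        by_contra h
        exact (hlt u hu h).ne' he
      · rintro rfl
        exact ⟨by norm_num, by simp⟩
  · intro hlt
    have ht := t0_nonneg μ₀
    have hr : 0 ≤ τ₀ μ₀ / τ := by positivity
    have hr1 : τ₀ μ₀ / τ ≤ 1 := by rw [div_le_one hτ]; exact hlt.le
    have hw2 : Real.sqrt (1 - τ₀ μ₀ / τ) ^ 2 = 1 - τ₀ μ₀ / τ := Real.sq_sqrt (by linarith)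
    have hw0 : 0 ≤ Real.sqrt (1 - τ₀ μ₀ / τ) := Real.sqrt_nonneg _
    have hw1 : Real.sqrt (1 - τ₀ μ₀ / τ) ≤ 1 := by nlinarith
    have hv : τ * (1 - Real.sqrt (1 - τ₀ μ₀ / τ) ^ 2) = τ₀ μ₀ := by
      rw [hw2]; field_simp; ring
    generalize Real.sqrt (1 - τ₀ μ₀ / τ) = w at *
    refine ⟨⟨⟨w, ⟨by linarith, hw1⟩, by simp only [hv]⟩, ?_⟩, ?_⟩
    · rintro _ ⟨u, hu, rfl⟩
      by_cases h : τ * (1 - u ^ 2) = τ₀ μ₀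
      · simp only [h]; exact le_rfl
      · exact (fProf_min μ₀ hμ (key u hu) h).le
    · ext u
      simp only [Set.mem_ofPred_eq, Set.mem_singleton_iff, Set.mem_insert_iff]
      constructor
      · rintro ⟨hu, he⟩
        have h : τ * (1 - u ^ 2) = τ₀ μ₀ := by
          by_contra h
          exact (fProf_min μ₀ hμ (key u hu) h).ne' he
        rw [← hv] at h
        have h' := mul_left_cancel₀ hτ.ne' h
        have : u ^ 2 = w ^ 2 := by linarith
        exact (sq_eq_sq_iff_eq_or_eq_neg.mp this).symm
      · rintro (rfl | rfl)
        · exact ⟨⟨by linarith, by linarith⟩, by rw [neg_sq, hv]⟩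
        · exact ⟨⟨by linarith, hw1⟩, by rw [hv]⟩
end
end

section
/- Fix real parameters h > 0, η, ζ, γ, θ. For smooth functions u : ℝ² × ℝ → ℂ in variables (r, s, t), define D_r = −i ∂_r, D_s = −i ∂_s, D_t = −i ∂_t, and the operators P u = (h^{1/6} D_r u − sin θ · t u − h^{1/3} cos θ · t (η s + ζ r) u) applied twice, plus (h^{1/6} D_s u + cos θ · t u + h^{1/6} γ (r²/2) u − h^{1/3} sin θ · t(η s + ζ r) u) applied twice, plus D_t² u; and L₁ u = sin θ · D_r u − cos θ ((γ/2) r² u + D_s u), L₂ u = cos θ · D_r u + sin θ ((γ/2) r² u + D_s u) − h^{1/6}(ζ r + η s) t u. Then for every smooth u, P u = D_t² u + (t − h^{1/6} L₁)² u + h^{1/3} L₂² u, where (t − h^{1/6} L₁)² u means applying the operator v ↦ t v − h^{1/6} L₁ v twice and L₂² u means applying L₂ twice. -/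
noncomputable section

/-- A point `(r, s, t)` of `ℝ² × ℝ`. -/
abbrev Pt3 := ℝ × ℝ × ℝ

/-- Coercion of a real scalar to ℂ. -/
def rc (a : ℝ) : ℂ := (a : ℂ)

/-- `D_r = −i ∂_r`. -/
def Dr (u : Pt3 → ℂ) (x : Pt3) : ℂ := -Complex.I * fderiv ℝ u x (1, 0, 0)

/-- `D_s = −i ∂_s`. -/
def Ds (u : Pt3 → ℂ) (x : Pt3) : ℂ := -Complex.I * fderiv ℝ u x (0, 1, 0)

/-- `D_t = −i ∂_t`. -/
def Dt (u : Pt3 → ℂ) (x : Pt3) : ℂ := -Complex.I * fderiv ℝ u x (0, 0, 1)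

/-- The first-order factor
`h^{1/6} D_r − sin θ · t − h^{1/3} cos θ · t (η s + ζ r)`. -/
def opA (h η ζ θ : ℝ) (u : Pt3 → ℂ) (x : Pt3) : ℂ :=
  rc (h ^ ((1 : ℝ) / 6)) * Dr u x - rc (Real.sin θ) * rc x.2.2 * u x
    - rc (h ^ ((1 : ℝ) / 3)) * rc (Real.cos θ) * rc x.2.2
        * rc (η * x.2.1 + ζ * x.1) * u x

/-- The first-order factor
`h^{1/6} D_s + cos θ · t + h^{1/6} γ r²/2 − h^{1/3} sin θ · t (η s + ζ r)`. -/
def opB (h η ζ γ θ : ℝ) (u : Pt3 → ℂ) (x : Pt3) : ℂ :=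
  rc (h ^ ((1 : ℝ) / 6)) * Ds u x + rc (Real.cos θ) * rc x.2.2 * u x
    + rc (h ^ ((1 : ℝ) / 6)) * rc γ * rc (x.1 ^ 2 / 2) * u x
    - rc (h ^ ((1 : ℝ) / 3)) * rc (Real.sin θ) * rc x.2.2
        * rc (η * x.2.1 + ζ * x.1) * u x

/-- `L₁ = sin θ D_r − cos θ ((γ/2) r² + D_s)`. -/
def opL1 (γ θ : ℝ) (u : Pt3 → ℂ) (x : Pt3) : ℂ :=
  rc (Real.sin θ) * Dr u x
    - rc (Real.cos θ) * (rc ((γ / 2) * x.1 ^ 2) * u x + Ds u x)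

/-- `L₂ = cos θ D_r + sin θ ((γ/2) r² + D_s) − h^{1/6} (ζ r + η s) t`. -/
def opL2 (h η ζ γ θ : ℝ) (u : Pt3 → ℂ) (x : Pt3) : ℂ :=
  rc (Real.cos θ) * Dr u x
    + rc (Real.sin θ) * (rc ((γ / 2) * x.1 ^ 2) * u x + Ds u x)
    - rc (h ^ ((1 : ℝ) / 6)) * rc (ζ * x.1 + η * x.2.1) * rc x.2.2 * u x

/-- The operator `v ↦ t v − h^{1/6} L₁ v`. -/
def opM (h γ θ : ℝ) (u : Pt3 → ℂ) (x : Pt3) : ℂ :=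
  rc x.2.2 * u x - rc (h ^ ((1 : ℝ) / 6)) * opL1 γ θ u x

/-- Linearity of a directional derivative on differentiable functions. -/
lemma fderiv_comb (a b : ℂ) (f g : Pt3 → ℂ) (hf : Differentiable ℝ f)
    (hg : Differentiable ℝ g) (x v : Pt3) :
    fderiv ℝ (fun y => a * f y + b * g y) x v
      = a * fderiv ℝ f x v + b * fderiv ℝ g x v := by
  have h1 := ((hf x).hasFDerivAt.const_mul a).add ((hg x).hasFDerivAt.const_mul b)
  have h2 : fderiv ℝ (fun y => a * f y + b * g y) x = _ := h1.fderiv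
  rw [h2]
  simp

lemma opM_comb (h γ θ : ℝ) (a b : ℂ) (f g : Pt3 → ℂ) (hf : Differentiable ℝ f)
    (hg : Differentiable ℝ g) (x : Pt3) :
    opM h γ θ (fun y => a * f y + b * g y) x
      = a * opM h γ θ f x + b * opM h γ θ g x := by
  simp only [opM, opL1, Dr, Ds, fderiv_comb a b f g hf hg]
  ring

lemma opL2_comb (h η ζ γ θ : ℝ) (a b : ℂ) (f g : Pt3 → ℂ) (hf : Differentiable ℝ f)
    (hg : Differentiable ℝ g) (x : Pt3) :
    opL2 h η ζ γ θ (fun y => a * f y + b * g y) x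
      = a * opL2 h η ζ γ θ f x + b * opL2 h η ζ γ θ g x := by
  simp only [opL2, Dr, Ds, fderiv_comb a b f g hf hg]
  ring

lemma rc_third (h : ℝ) (hh : 0 < h) :
    rc (h ^ ((1 : ℝ) / 3)) = rc (h ^ ((1 : ℝ) / 6)) ^ 2 := by
  unfold rc
  rw [← Complex.ofReal_pow, ← Real.rpow_natCast, ← Real.rpow_mul hh.le]
  norm_num

lemma rc_trig (θ : ℝ) : rc (Real.sin θ) ^ 2 + rc (Real.cos θ) ^ 2 = 1 := by
  unfold rc
  exact_mod_cast Real.sin_sq_add_cos_sq θ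

/-- `A = h^{1/6} cos θ L₂ − sin θ M`. -/
lemma opA_eq (h η ζ γ θ : ℝ) (hh : 0 < h) (u : Pt3 → ℂ) (x : Pt3) :
    opA h η ζ θ u x = (rc (h ^ ((1 : ℝ) / 6)) * rc (Real.cos θ)) * opL2 h η ζ γ θ u x
      + (-rc (Real.sin θ)) * opM h γ θ u x := by
  have e := rc_trig θ
  simp only [opA, opL2, opM, opL1, rc_third h hh]
  generalize rc (h ^ ((1 : ℝ) / 6)) = k
  generalize rc (Real.sin θ) = S at *
  generalize rc (Real.cos θ) = C at *
  simp only [rc]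
  push_cast
  linear_combination (-(k * Dr u x)) * e

/-- `B = h^{1/6} sin θ L₂ + cos θ M`. -/
lemma opB_eq (h η ζ γ θ : ℝ) (hh : 0 < h) (u : Pt3 → ℂ) (x : Pt3) :
    opB h η ζ γ θ u x = (rc (h ^ ((1 : ℝ) / 6)) * rc (Real.sin θ)) * opL2 h η ζ γ θ u x
      + rc (Real.cos θ) * opM h γ θ u x := by
  have e := rc_trig θ
  simp only [opB, opL2, opM, opL1, rc_third h hh]
  generalize rc (h ^ ((1 : ℝ) / 6)) = k
  generalize rc (Real.sin θ) = S at *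
  generalize rc (Real.cos θ) = C at *
  simp only [rc]
  push_cast
  linear_combination (-(k * (Ds u x + γ / 2 * x.1 ^ 2 * u x))) * e

lemma diff_rc {f : Pt3 → ℝ} (hf : Differentiable ℝ f) :
    Differentiable ℝ (fun x => rc (f x)) :=
  Complex.ofRealCLM.differentiable.comp hf

lemma diff_dir {u : Pt3 → ℂ} (hu : ContDiff ℝ (⊤ : ℕ∞) u) (v : Pt3) :
    Differentiable ℝ (fun x => -Complex.I * fderiv ℝ u x v) := by
  have h1 : ContDiff ℝ 1 (fderiv ℝ u) := hu.fderiv_right (by norm_cast)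
  have h2 : Differentiable ℝ (fderiv ℝ u) := h1.differentiable (by norm_num)
  exact (h2.clm_apply (differentiable_const v)).const_mul _

lemma diff_M (h γ θ : ℝ) {u : Pt3 → ℂ} (hu : ContDiff ℝ (⊤ : ℕ∞) u) :
    Differentiable ℝ (opM h γ θ u) := by
  have d0 : Differentiable ℝ u := hu.differentiable (by simp)
  have d1 : Differentiable ℝ (Dr u) := diff_dir hu _
  have d2 : Differentiable ℝ (Ds u) := diff_dir hu _
  have c1 : Differentiable ℝ (fun x : Pt3 => rc x.2.2) := diff_rc (by fun_prop)
  have c2 : Differentiable ℝ (fun x : Pt3 => rc ((γ / 2) * x.1 ^ 2)) := diff_rc (by fun_prop)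
  unfold opM opL1
  fun_prop

lemma diff_L2 (h η ζ γ θ : ℝ) {u : Pt3 → ℂ} (hu : ContDiff ℝ (⊤ : ℕ∞) u) :
    Differentiable ℝ (opL2 h η ζ γ θ u) := by
  have d0 : Differentiable ℝ u := hu.differentiable (by simp)
  have d1 : Differentiable ℝ (Dr u) := diff_dir hu _
  have d2 : Differentiable ℝ (Ds u) := diff_dir hu _
  have c1 : Differentiable ℝ (fun x : Pt3 => rc x.2.2) := diff_rc (by fun_prop)
  have c2 : Differentiable ℝ (fun x : Pt3 => rc ((γ / 2) * x.1 ^ 2)) := diff_rc (by fun_prop)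
  have c3 : Differentiable ℝ (fun x : Pt3 => rc (ζ * x.1 + η * x.2.1)) := diff_rc (by fun_prop)
  unfold opL2
  fun_prop

/-- The rescaled model operator factorizes as
`P = D_t² + (t − h^{1/6} L₁)² + h^{1/3} L₂²` on smooth functions. -/
theorem stmt_18 (h η ζ γ θ : ℝ) (hh : 0 < h) (u : Pt3 → ℂ)
    (hu : ContDiff ℝ (⊤ : ℕ∞) u) (x : Pt3) :
    opA h η ζ θ (opA h η ζ θ u) x + opB h η ζ γ θ (opB h η ζ γ θ u) x
        + Dt (Dt u) x
      = Dt (Dt u) x + opM h γ θ (opM h γ θ u) x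
        + rc (h ^ ((1 : ℝ) / 3)) * opL2 h η ζ γ θ (opL2 h η ζ γ θ u) x := by
  have dM := diff_M h γ θ hu
  have dL := diff_L2 h η ζ γ θ hu
  have e := rc_trig θ
  rw [opA_eq h η ζ γ θ hh (opA h η ζ θ u), opB_eq h η ζ γ θ hh (opB h η ζ γ θ u),
    funext (opA_eq h η ζ γ θ hh u), funext (opB_eq h η ζ γ θ hh u)]
  simp only [opM_comb h γ θ _ _ _ _ dL dM, opL2_comb h η ζ γ θ _ _ _ _ dL dM, rc_third h hh]
  linear_combination (rc (h ^ ((1 : ℝ) / 6)) ^ 2 * opL2 h η ζ γ θ (opL2 h η ζ γ θ u) x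
    + opM h γ θ (opM h γ θ u) x) * e
end
end
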